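/- For any two policies π and π′ and any initial state distribution μ over S, |V^{π′}_μ − V^π_μ − (∇_π V^π_μ)ᵀ(π′ − π)| ≤ (1/(1−γ)²)·∥d^{π′}_μ − d^π_μ∥₁·∥π′ − π∥_{∞,1}, where ∥·∥₁ is the total-variation (ℓ₁) norm on ℝ^S. -/

import Mathlib

/-!
The proof is the performance difference lemma plus Hölder's inequality.

Writing `U s` for the value started at `s`, the value is linear in the initial distribution
(`valueV_eq_sum_dirac`) and `U s = ∑_a π(a|s) Q^π(s,a)` (`bellman`). Pairing the flow equation
`d' = (1-γ) μ + γ P^{π'} d'` (`visit_flow`) of the visitation distribution `d'` of `π'` with `U`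
yields `(1-γ)(V^{π'} - V^π) = ∑_s d'(s) ∑_a (π' - π)(s,a) Q^π(s,a)` (`performance_difference`).
The gradient term is the same expression with the visitation distribution `d` of `π` in place
of `d'`, so the error is `(1/(1-γ)) ∑_s (d' - d)(s) ∑_a (π' - π)(s,a) Q^π(s,a)`, and
`|Q^π| ≤ 1/(1-γ)` (`abs_valueQ_le`) gives the bound.
-/

open Finset

noncomputable section

/-- `π` is a stochastic policy: `π s` is a probability distribution over actions. -/
def IsPolicy {S A : Type*} [Fintype A] (π : S → A → ℝ) : Prop :=
  (∀ s a, 0 ≤ π s a) ∧ ∀ s, ∑ a, π s a = 1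

/-- `P` is a transition probability model: `P s a` is a distribution over next states. -/
def IsKernel {S A : Type*} [Fintype S] (P : S → A → S → ℝ) : Prop :=
  (∀ s a s', 0 ≤ P s a s') ∧ ∀ s a, ∑ s', P s a s' = 1

/-- `d` is a probability distribution over states. -/
def IsDist {S : Type*} [Fintype S] (d : S → ℝ) : Prop :=
  (∀ s, 0 ≤ d s) ∧ ∑ s, d s = 1

/-- The Markov operator `P^π` induced by policy `π` acting on distributions over states:
`(P^π d)(s') = ∑_s ∑_a P(s'|s,a)·π(a|s)·d(s)`. -/
def markovStep {S A : Type*} [Fintype S] [Fintype A] (P : S → A → S → ℝ)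
    (π : S → A → ℝ) (d : S → ℝ) : S → ℝ :=
  fun s' => ∑ s, ∑ a, P s a s' * π s a * d s

/-- The discounted state-visitation distribution
`d^π_μ(s) = (1−γ) ∑_{t≥0} γ^t Pr(s_t = s | π, s₀ ∼ μ)`. -/
def visitDist {S A : Type*} [Fintype S] [Fintype A] (P : S → A → S → ℝ) (γ : ℝ)
    (π : S → A → ℝ) (μ : S → ℝ) : S → ℝ :=
  fun s => (1 - γ) * ∑' t : ℕ, γ ^ t * ((markovStep P π)^[t] μ) s

/-- The value function `V^π_μ = E[∑_{t≥0} γ^t r(s_t,a_t)]` with `s₀ ∼ μ`, actions from `π`. -/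
def valueV {S A : Type*} [Fintype S] [Fintype A] (P : S → A → S → ℝ) (r : S → A → ℝ)
    (γ : ℝ) (π : S → A → ℝ) (μ : S → ℝ) : ℝ :=
  ∑' t : ℕ, γ ^ t * ∑ s, ((markovStep P π)^[t] μ) s * ∑ a, π s a * r s a

/-- The state-action value function
`Q^π(s,a) = E[∑_{t≥0} γ^t r(s_t,a_t) | s₀ = s, a₀ = a, actions thereafter from π]`. -/
def valueQ {S A : Type*} [Fintype S] [Fintype A] [DecidableEq S] (P : S → A → S → ℝ)
    (r : S → A → ℝ) (γ : ℝ) (π : S → A → ℝ) (s : S) (a : A) : ℝ :=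
  r s a + γ * ∑ s', P s a s' * valueV P r γ π (fun s'' => if s'' = s' then 1 else 0)

/-- The functional policy gradient `(∇_π V^π_μ)(s,a) = (1/(1−γ))·d^π_μ(s)·Q^π(s,a)`. -/
def gradV {S A : Type*} [Fintype S] [Fintype A] [DecidableEq S] (P : S → A → S → ℝ)
    (r : S → A → ℝ) (γ : ℝ) (π : S → A → ℝ) (μ : S → ℝ) : S → A → ℝ :=
  fun s a => (1 / (1 - γ)) * visitDist P γ π μ s * valueQ P r γ π s a

/-- The pairing `xᵀ y = ∑_{s,a} x(s,a)·y(s,a)` on `ℝ^{S×A}`. -/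
def dotSA {S A : Type*} [Fintype S] [Fintype A] (x y : S → A → ℝ) : ℝ :=
  ∑ s, ∑ a, x s a * y s a

/-- The norm `∥x∥_{∞,1} = max_{s∈S} ∑_{a∈A} |x(s,a)|` on `ℝ^{S×A}`. -/
def normInfOne {S A : Type*} [Fintype S] [Fintype A] [Nonempty S] (x : S → A → ℝ) : ℝ :=
  ⨆ s, ∑ a, |x s a|

/-- The `ℓ₁` (total-variation) norm `∥d∥₁ = ∑_{s∈S} |d s|` on `ℝ^S`. -/
def normL1 {S : Type*} [Fintype S] (d : S → ℝ) : ℝ := ∑ s, |d s|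

lemma IsDist.markovStep {S A : Type*} [Fintype S] [Fintype A] {P : S → A → S → ℝ}
    {π : S → A → ℝ} {d : S → ℝ} (hP : IsKernel P) (hπ : IsPolicy π) (hd : IsDist d) :
    IsDist (markovStep P π d) := by
  refine ⟨fun s' => Finset.sum_nonneg fun s _ => Finset.sum_nonneg fun a _ =>
    mul_nonneg (mul_nonneg (hP.1 s a s') (hπ.1 s a)) (hd.1 s), ?_⟩
  unfold _root_.markovStep
  rw [Finset.sum_comm]
  rw [← hd.2]
  refine Finset.sum_congr rfl fun s _ => ?_
  rw [Finset.sum_comm]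
  simp_rw [← Finset.sum_mul, hP.2 s, one_mul, hπ.2 s, one_mul]

lemma IsDist.iterate {S A : Type*} [Fintype S] [Fintype A] {P : S → A → S → ℝ}
    {π : S → A → ℝ} {d : S → ℝ} (hP : IsKernel P) (hπ : IsPolicy π) (hd : IsDist d) (t : ℕ) :
    IsDist ((_root_.markovStep P π)^[t] d) := by
  induction t with
  | zero => exact hd
  | succ t ih => rw [Function.iterate_succ_apply']; exact ih.markovStep hP hπ

lemma IsDist.le_one {S : Type*} [Fintype S] {d : S → ℝ} (hd : IsDist d) (s : S) : d s ≤ 1 :=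
  hd.2 ▸ Finset.single_le_sum (fun i _ => hd.1 i) (Finset.mem_univ s)

lemma isDist_dirac {S : Type*} [Fintype S] [DecidableEq S] (s : S) :
    IsDist (fun s'' => if s'' = s then (1 : ℝ) else 0) :=
  ⟨fun s' => by dsimp only; split_ifs <;> norm_num, by simp⟩

lemma summable_visit {S A : Type*} [Fintype S] [Fintype A] {P : S → A → S → ℝ} {γ : ℝ}
    {π : S → A → ℝ} {μ : S → ℝ} (hP : IsKernel P) (hγ : γ ∈ Set.Ico (0 : ℝ) 1)
    (hπ : IsPolicy π) (hμ : IsDist μ) (s : S) :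
    Summable fun t : ℕ => γ ^ t * ((markovStep P π)^[t] μ) s := by
  refine Summable.of_nonneg_of_le (fun t => mul_nonneg (pow_nonneg hγ.1 t)
    ((hμ.iterate hP hπ t).1 s)) (fun t => ?_) (summable_geometric_of_lt_one hγ.1 hγ.2)
  exact mul_le_of_le_one_right (pow_nonneg hγ.1 t) ((hμ.iterate hP hπ t).le_one s)

/-- The value is the reward averaged over the discounted visitation distribution. -/
lemma valueV_eq_visit {S A : Type*} [Fintype S] [Fintype A] {P : S → A → S → ℝ}
    (r : S → A → ℝ) {γ : ℝ} {π : S → A → ℝ} {μ : S → ℝ} (hP : IsKernel P)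
    (hγ : γ ∈ Set.Ico (0 : ℝ) 1) (hπ : IsPolicy π) (hμ : IsDist μ) :
    (1 - γ) * valueV P r γ π μ = ∑ s, visitDist P γ π μ s * ∑ a, π s a * r s a := by
  simp only [valueV, visitDist, mul_assoc, ← Finset.mul_sum]
  congr 1
  simp_rw [← tsum_mul_right]
  rw [← Summable.tsum_finsetSum fun s _ => (summable_visit hP hγ hπ hμ s).mul_right _]
  simp only [Finset.mul_sum, mul_assoc]

/-- The Bellman flow equation `d = (1-γ) μ + γ P^π d` for the visitation distribution. -/
lemma visit_flow {S A : Type*} [Fintype S] [Fintype A] {P : S → A → S → ℝ}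
    {γ : ℝ} {π : S → A → ℝ} {μ : S → ℝ} (hP : IsKernel P)
    (hγ : γ ∈ Set.Ico (0 : ℝ) 1) (hπ : IsPolicy π) (hμ : IsDist μ) (s' : S) :
    visitDist P γ π μ s' = (1 - γ) * μ s' + γ * markovStep P π (visitDist P γ π μ) s' := by
  have hstep : markovStep P π (visitDist P γ π μ) s' =
      (1 - γ) * ∑' t : ℕ, γ ^ t * ((markovStep P π)^[t + 1] μ) s' := by
    simp only [Function.iterate_succ_apply']
    simp only [markovStep, visitDist]
    simp only [Finset.mul_sum, mul_left_comm _ (1 - γ), ← tsum_mul_left]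
    rw [Summable.tsum_finsetSum, Finset.sum_congr rfl]
    · intro s _
      rw [Summable.tsum_finsetSum]
      · refine Finset.sum_congr rfl fun a _ => tsum_congr fun t => ?_
        ring
      · intro a _
        refine ((summable_visit hP hγ hπ hμ s).mul_left ((1 - γ) * (P s a s' * π s a))).congr
          fun t => ?_
        ring
    · intro s _
      refine summable_sum fun a _ => ?_
      refine ((summable_visit hP hγ hπ hμ s).mul_left ((1 - γ) * (P s a s' * π s a))).congr
          fun t => ?_
      ring
  rw [hstep]
  simp only [visitDist]
  rw [(summable_visit hP hγ hπ hμ s').tsum_eq_zero_add]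
  simp only [pow_succ', mul_assoc, tsum_mul_left]
  simp
  ring

lemma valueV_summable {S A : Type*} [Fintype S] [Fintype A] {P : S → A → S → ℝ}
    (r : S → A → ℝ) {γ : ℝ} {π : S → A → ℝ} {μ : S → ℝ} (hP : IsKernel P)
    (hγ : γ ∈ Set.Ico (0 : ℝ) 1) (hπ : IsPolicy π) (hμ : IsDist μ) :
    Summable fun t : ℕ =>
      γ ^ t * ∑ s, ((markovStep P π)^[t] μ) s * ∑ a, π s a * r s a := by
  refine (summable_sum (s := Finset.univ) fun s _ =>
    (summable_visit hP hγ hπ hμ s).mul_right (∑ a, π s a * r s a)).congr fun t => ?_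
  rw [Finset.mul_sum]
  exact Finset.sum_congr rfl fun s _ => mul_assoc _ _ _

/-- One-step unrolling of the value: immediate reward plus discounted value from the law of `s₁`. -/
lemma valueV_step {S A : Type*} [Fintype S] [Fintype A] {P : S → A → S → ℝ}
    (r : S → A → ℝ) {γ : ℝ} {π : S → A → ℝ} {μ : S → ℝ} (hP : IsKernel P)
    (hγ : γ ∈ Set.Ico (0 : ℝ) 1) (hπ : IsPolicy π) (hμ : IsDist μ) :
    valueV P r γ π μ =
      ∑ s, μ s * ∑ a, π s a * r s a + γ * valueV P r γ π (markovStep P π μ) := by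
  unfold valueV
  rw [(valueV_summable r hP hγ hπ hμ).tsum_eq_zero_add]
  simp only [pow_succ', mul_assoc, tsum_mul_left, Function.iterate_succ_apply]
  simp

/-- The law of `s_t` is the mixture over `s ∼ μ` of the laws of `s_t` started at `s`. -/
lemma iterate_dirac {S A : Type*} [Fintype S] [Fintype A] [DecidableEq S]
    (P : S → A → S → ℝ) (π : S → A → ℝ) (μ : S → ℝ) (t : ℕ) (s' : S) :
    ((markovStep P π)^[t] μ) s' =
      ∑ s, μ s * ((markovStep P π)^[t] (fun s'' => if s'' = s then 1 else 0)) s' := by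
  induction t generalizing s' with
  | zero => simp
  | succ t ih =>
    simp only [Function.iterate_succ_apply']
    simp only [markovStep] at ih ⊢
    simp_rw [ih, Finset.mul_sum]
    conv_rhs => rw [Finset.sum_comm]
    refine Finset.sum_congr rfl fun x _ => ?_
    rw [Finset.sum_comm]
    refine Finset.sum_congr rfl fun y _ => Finset.sum_congr rfl fun a _ => ?_
    ring

/-- The value is linear in the initial distribution. -/
lemma valueV_eq_sum_dirac {S A : Type*} [Fintype S] [Fintype A] [DecidableEq S]
    {P : S → A → S → ℝ} (r : S → A → ℝ) {γ : ℝ} {π : S → A → ℝ} (μ : S → ℝ) (hP : IsKernel P)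
    (hγ : γ ∈ Set.Ico (0 : ℝ) 1) (hπ : IsPolicy π) :
    valueV P r γ π μ =
      ∑ s, μ s * valueV P r γ π (fun s'' => if s'' = s then 1 else 0) := by
  simp only [valueV, ← tsum_mul_left]
  rw [← Summable.tsum_finsetSum fun s _ =>
    (valueV_summable r hP hγ hπ (isDist_dirac s)).mul_left (μ s)]
  refine tsum_congr fun t => ?_
  simp_rw [iterate_dirac P π μ t, Finset.sum_mul, Finset.mul_sum]
  rw [Finset.sum_comm]
  refine Finset.sum_congr rfl fun y _ => Finset.sum_congr rfl fun x _ =>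
    Finset.sum_congr rfl fun a _ => ?_
  ring

/-- The Bellman equation `V^π(s) = ∑_a π(a|s) Q^π(s,a)`. -/
lemma bellman {S A : Type*} [Fintype S] [Fintype A] [DecidableEq S]
    {P : S → A → S → ℝ} (r : S → A → ℝ) {γ : ℝ} {π : S → A → ℝ} (hP : IsKernel P)
    (hγ : γ ∈ Set.Ico (0 : ℝ) 1) (hπ : IsPolicy π) (s : S) :
    valueV P r γ π (fun s'' => if s'' = s then 1 else 0) =
      ∑ a, π s a * valueQ P r γ π s a := by
  rw [valueV_step r hP hγ hπ (isDist_dirac s), valueV_eq_sum_dirac r _ hP hγ hπ]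
  simp only [valueQ, mul_add, Finset.sum_add_distrib]
  congr 1
  · simp
  · simp only [markovStep, mul_ite, mul_one, mul_zero, Finset.mul_sum, Finset.sum_mul]
    rw [Finset.sum_comm' (t' := Finset.univ) (s' := fun _ => Finset.univ) (by simp)]
    rw [Finset.sum_eq_single s]
    · rw [Finset.sum_comm]
      refine Finset.sum_congr rfl fun a _ => Finset.sum_congr rfl fun x _ => ?_
      rw [if_pos rfl]; ring
    · intro b _ hb
      simp [hb]
    · simp

/-- The performance difference lemma: the value gap is the `π`-advantage of `π'` averaged over the
visitation distribution of `π'`. -/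
lemma performance_difference {S A : Type*} [Fintype S] [Fintype A] [DecidableEq S]
    {P : S → A → S → ℝ} (r : S → A → ℝ) {γ : ℝ} {π π' : S → A → ℝ} {μ : S → ℝ}
    (hP : IsKernel P) (hγ : γ ∈ Set.Ico (0 : ℝ) 1) (hπ : IsPolicy π) (hπ' : IsPolicy π')
    (hμ : IsDist μ) :
    (1 - γ) * (valueV P r γ π' μ - valueV P r γ π μ) =
      ∑ s, visitDist P γ π' μ s * ∑ a, (π' s a - π s a) * valueQ P r γ π s a := by
  set U : S → ℝ := fun s => valueV P r γ π (fun s'' => if s'' = s then 1 else 0) with hU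
  set d' := visitDist P γ π' μ with hd'
  have hQ : ∀ s a, valueQ P r γ π s a = r s a + γ * ∑ s', P s a s' * U s' := fun _ _ => rfl
  have hV : (1 - γ) * valueV P r γ π μ =
      ∑ s, d' s * U s - ∑ s, d' s * ∑ a, π' s a * (γ * ∑ s', P s a s' * U s') := by
    have hswap : ∑ s, d' s * ∑ a, π' s a * (γ * ∑ s', P s a s' * U s') =
        ∑ s', γ * markovStep P π' d' s' * U s' := by
      simp only [markovStep, Finset.mul_sum, Finset.sum_mul]
      conv_rhs => rw [Finset.sum_comm]
      refine Finset.sum_congr rfl fun s _ => ?_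
      rw [Finset.sum_comm]
      refine Finset.sum_congr rfl fun y _ => Finset.sum_congr rfl fun a _ => ?_
      ring
    rw [hswap, valueV_eq_sum_dirac r μ hP hγ hπ, Finset.mul_sum, ← Finset.sum_sub_distrib]
    refine Finset.sum_congr rfl fun s _ => ?_
    have := visit_flow hP hγ hπ' hμ s
    rw [← hd'] at this
    linear_combination (-U s) * this
  rw [mul_sub, valueV_eq_visit r hP hγ hπ' hμ, hV, ← hd', ← Finset.sum_sub_distrib,
    ← Finset.sum_sub_distrib]
  refine Finset.sum_congr rfl fun s _ => ?_
  have hb : U s = ∑ a, π s a * valueQ P r γ π s a := bellman r hP hγ hπ s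
  simp only [sub_mul, Finset.sum_sub_distrib, ← hb]
  simp only [hQ, mul_add, Finset.sum_add_distrib]
  ring

lemma valueV_mem_Icc {S A : Type*} [Fintype S] [Fintype A] {P : S → A → S → ℝ}
    {r : S → A → ℝ} {γ : ℝ} {π : S → A → ℝ} {μ : S → ℝ} (hP : IsKernel P)
    (hr : ∀ s a, r s a ∈ Set.Icc (0 : ℝ) 1)
    (hγ : γ ∈ Set.Ico (0 : ℝ) 1) (hπ : IsPolicy π) (hμ : IsDist μ) :
    valueV P r γ π μ ∈ Set.Icc 0 (1 / (1 - γ)) := by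
  have hR0 : ∀ s, 0 ≤ ∑ a, π s a * r s a := fun s =>
    Finset.sum_nonneg fun a _ => mul_nonneg (hπ.1 s a) (hr s a).1
  have hR1 : ∀ s, ∑ a, π s a * r s a ≤ 1 := fun s =>
    (Finset.sum_le_sum fun a _ => mul_le_of_le_one_right (hπ.1 s a) (hr s a).2).trans_eq (hπ.2 s)
  constructor
  · exact tsum_nonneg fun t => mul_nonneg (pow_nonneg hγ.1 t)
      (Finset.sum_nonneg fun s _ => mul_nonneg ((hμ.iterate hP hπ t).1 s) (hR0 s))
  · rw [one_div, ← tsum_geometric_of_lt_one hγ.1 hγ.2]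
    refine (valueV_summable r hP hγ hπ hμ).tsum_le_tsum (fun t => ?_)
      (summable_geometric_of_lt_one hγ.1 hγ.2)
    refine mul_le_of_le_one_right (pow_nonneg hγ.1 t) ?_
    have hw := hμ.iterate hP hπ t
    exact (Finset.sum_le_sum fun s _ => mul_le_of_le_one_right (hw.1 s) (hR1 s)).trans_eq hw.2

lemma abs_valueQ_le {S A : Type*} [Fintype S] [Fintype A] [DecidableEq S]
    {P : S → A → S → ℝ} {r : S → A → ℝ} {γ : ℝ} {π : S → A → ℝ} (hP : IsKernel P)
    (hr : ∀ s a, r s a ∈ Set.Icc (0 : ℝ) 1)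
    (hγ : γ ∈ Set.Ico (0 : ℝ) 1) (hπ : IsPolicy π) (s : S) (a : A) :
    |valueQ P r γ π s a| ≤ 1 / (1 - γ) := by
  have hU := fun s' => valueV_mem_Icc hP hr hγ hπ (isDist_dirac s')
  have h0 : 0 ≤ ∑ s', P s a s' * valueV P r γ π (fun s'' => if s'' = s' then 1 else 0) :=
    Finset.sum_nonneg fun s' _ => mul_nonneg (hP.1 s a s') (hU s').1
  have h1 : ∑ s', P s a s' * valueV P r γ π (fun s'' => if s'' = s' then 1 else 0) ≤
      1 / (1 - γ) := by
    refine (Finset.sum_le_sum fun s' _ =>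
      mul_le_mul_of_nonneg_left (hU s').2 (hP.1 s a s')).trans_eq ?_
    rw [← Finset.sum_mul, hP.2, one_mul]
  have hpos : 0 < 1 - γ := sub_pos.2 hγ.2
  have heq : 1 + γ * (1 / (1 - γ)) = 1 / (1 - γ) := by field_simp; ring
  unfold valueQ
  rw [abs_of_nonneg (add_nonneg (hr s a).1 (mul_nonneg hγ.1 h0)), ← heq]
  exact add_le_add (hr s a).2 (mul_le_mul_of_nonneg_left h1 hγ.1)

/-- **First-order expansion of the value function via the performance difference lemma.**
For any two policies `π, π'` and any initial state distribution `μ`,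
`|V^{π'}_μ − V^π_μ − (∇_π V^π_μ)ᵀ(π' − π)| ≤ (1/(1−γ)²)·∥d^{π'}_μ − d^π_μ∥₁·∥π' − π∥_{∞,1}`. -/
theorem value_first_order_expansion {S A : Type*} [Fintype S] [Fintype A] [Nonempty S]
    [Nonempty A] [DecidableEq S] (P : S → A → S → ℝ) (r : S → A → ℝ) (γ : ℝ) (d₀ : S → ℝ)
    (hP : IsKernel P) (hr : ∀ s a, r s a ∈ Set.Icc (0 : ℝ) 1)
    (hγ : γ ∈ Set.Ico (0 : ℝ) 1) (hd₀ : IsDist d₀)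
    (π π' : S → A → ℝ) (hπ : IsPolicy π) (hπ' : IsPolicy π')
    (μ : S → ℝ) (hμ : IsDist μ) :
    |valueV P r γ π' μ - valueV P r γ π μ -
        dotSA (gradV P r γ π μ) (fun s a => π' s a - π s a)| ≤
      1 / (1 - γ) ^ 2 * normL1 (fun s => visitDist P γ π' μ s - visitDist P γ π μ s) *
        normInfOne (fun s a => π' s a - π s a) := by
  have hpos : 0 < 1 - γ := sub_pos.2 hγ.2
  set D : S → ℝ := fun s => visitDist P γ π' μ s - visitDist P γ π μ s with hD
  set N := normInfOne (fun s a => π' s a - π s a) with hN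
  have hNs : ∀ s, ∑ a, |π' s a - π s a| ≤ N := fun s =>
    le_ciSup (f := fun s => ∑ a, |π' s a - π s a|) (Set.finite_range _).bddAbove s
  have hkey : valueV P r γ π' μ - valueV P r γ π μ -
      dotSA (gradV P r γ π μ) (fun s a => π' s a - π s a) =
      1 / (1 - γ) * ∑ s, D s * ∑ a, (π' s a - π s a) * valueQ P r γ π s a := by
    have hdot : dotSA (gradV P r γ π μ) (fun s a => π' s a - π s a) =
        1 / (1 - γ) * ∑ s, visitDist P γ π μ s *
          ∑ a, (π' s a - π s a) * valueQ P r γ π s a := by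
      simp only [dotSA, gradV, Finset.mul_sum]
      refine Finset.sum_congr rfl fun s _ => Finset.sum_congr rfl fun a _ => ?_
      ring
    simp only [hD, sub_mul (visitDist P γ π' μ _), Finset.sum_sub_distrib]
    rw [← performance_difference r hP hγ hπ hπ' hμ, hdot, mul_sub, ← mul_assoc,
      one_div_mul_cancel hpos.ne', one_mul]
  have hinner : ∀ s, |∑ a, (π' s a - π s a) * valueQ P r γ π s a| ≤ 1 / (1 - γ) * N := by
    intro s
    calc |∑ a, (π' s a - π s a) * valueQ P r γ π s a|
        ≤ ∑ a, |(π' s a - π s a) * valueQ P r γ π s a| := Finset.abs_sum_le_sum_abs _ _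
      _ ≤ ∑ a, 1 / (1 - γ) * |π' s a - π s a| := by
          refine Finset.sum_le_sum fun a _ => ?_
          rw [abs_mul, mul_comm]
          exact mul_le_mul_of_nonneg_right (abs_valueQ_le hP hr hγ hπ s a) (abs_nonneg _)
      _ ≤ 1 / (1 - γ) * N := by
          rw [← Finset.mul_sum]
          exact mul_le_mul_of_nonneg_left (hNs s) (by positivity)
  rw [hkey, abs_mul, abs_of_pos (one_div_pos.2 hpos)]
  calc 1 / (1 - γ) * |∑ s, D s * ∑ a, (π' s a - π s a) * valueQ P r γ π s a|
      ≤ 1 / (1 - γ) * ∑ s, |D s| * (1 / (1 - γ) * N) := by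
        refine mul_le_mul_of_nonneg_left ?_ (by positivity)
        refine (Finset.abs_sum_le_sum_abs _ _).trans (Finset.sum_le_sum fun s _ => ?_)
        rw [abs_mul]
        exact mul_le_mul_of_nonneg_left (hinner s) (abs_nonneg _)
    _ = 1 / (1 - γ) ^ 2 * normL1 D * N := by
        rw [← Finset.sum_mul]
        unfold normL1
        field_simp
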